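/- Let A be a skew left brace such that A = B + C, where B and C are left ideals of A that are trivial as skew left braces. Then λ_{β∘γ} = λ_{γ∘β} for all β ∈ B and γ ∈ C. -/

import Mathlib

/-- A skew left brace: `(A,+)` and `(A,∘)` are groups (sharing the same identity `0`)
such that `a ∘ (b + c) = a ∘ b - a + a ∘ c`.  Here `circ` is the operation `∘` and
`cinv a` is the inverse of `a` in `(A,∘)`. -/
class SkewBrace (A : Type*) extends AddGroup A where
  circ : A → A → A
  cinv : A → A
  circ_assoc : ∀ a b c : A, circ (circ a b) c = circ a (circ b c)
  zero_circ : ∀ a : A, circ 0 a = a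
  circ_zero : ∀ a : A, circ a 0 = a
  cinv_circ : ∀ a : A, circ (cinv a) a = 0
  circ_cinv : ∀ a : A, circ a (cinv a) = 0
  compat : ∀ a b c : A, circ a (b + c) = circ a b + -a + circ a c

open SkewBrace

/-- `lam a b = -a + a ∘ b`. -/
def lam {A : Type*} [SkewBrace A] (a b : A) : A := -a + circ a b

/-- The star operation `a * b = lam a b - b = -a + a ∘ b - b`. -/
def bstar {A : Type*} [SkewBrace A] (a b : A) : A := lam a b - b

/-- `X * Y`: the subgroup of `(A,+)` generated by `{x * y : x ∈ X, y ∈ Y}`. -/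
def starSpan {A : Type*} [SkewBrace A] (X Y : Set A) : AddSubgroup A :=
  AddSubgroup.closure {z | ∃ x ∈ X, ∃ y ∈ Y, z = bstar x y}

/-- The right series of `st`: `rseriesOf st 0 = A = A^(1)` and
`rseriesOf st n = A^(n+1)`, so that `A^(n+1) = A^(n) * A`. -/
def rseriesOf {G : Type*} [AddGroup G] (st : G → G → G) : ℕ → AddSubgroup G
  | 0 => ⊤
  | n + 1 => AddSubgroup.closure {z | ∃ u ∈ rseriesOf st n, ∃ a : G, z = st u a}

/-!
Each `lam a` is an additive endomorphism, and `lam` turns `∘` into composition. Triviality of `B`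
says that `lam β` fixes `B` pointwise for `β ∈ B`, and likewise for `C`. Since `lam γ` maps `B`
into itself, `lam β` and `lam γ` commute on `B`: both composites agree there with `lam γ`.
Symmetrically both agree with `lam β` on `C`, so the composites coincide on the subgroup
generated by `B` and `C`.
-/

section Lam

variable {A : Type*} [SkewBrace A]

theorem lam_add (a x y : A) : lam a (x + y) = lam a x + lam a y := by
  simp only [lam, compat, add_assoc]

/-- The map `λ_a`, that is `lam a`, bundled as an endomorphism of the additive group, so that
statements about `lam a` on generators extend to the subgroup they generate. -/
def lamHom (a : A) : A →+ A :=
  AddMonoidHom.mk' (lam a) (lam_add a)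

theorem lamHom_apply (a x : A) : lamHom a x = lam a x :=
  rfl

theorem lam_neg_add (a x y : A) : lam a (-x + y) = -lam a x + lam a y := by
  simp only [← lamHom_apply, map_add, map_neg]

theorem lam_circ (a b x : A) : lam (circ a b) x = lam a (lam b x) :=
  calc
    lam (circ a b) x = -circ a b + circ a (circ b x) := by rw [lam, circ_assoc]
    _ = -(-a + circ a b) + (-a + circ a (circ b x)) := by
      rw [neg_add_rev, neg_neg, add_assoc, add_neg_cancel_left]
    _ = lam a (-b + circ b x) := (lam_neg_add a b (circ b x)).symm

theorem lam_eq_self_iff {a b : A} : lam a b = b ↔ a + b = circ a b :=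
  neg_add_eq_iff_eq_add.trans eq_comm

theorem lam_eq_of_mem_sup {B C : AddSubgroup A} {a b x : A}
    (hB : ∀ y ∈ B, lam a y = lam b y) (hC : ∀ y ∈ C, lam a y = lam b y) (hx : x ∈ B ⊔ C) :
    lam a x = lam b x :=
  have hle : B ⊔ C ≤ (lamHom a).eqLocus (lamHom b) := sup_le hB hC
  hle hx

theorem stmt4_general (B C : AddSubgroup A)
    (hB : ∀ γ ∈ C, ∀ x ∈ B, lam γ x ∈ B)
    (hC : ∀ β ∈ B, ∀ x ∈ C, lam β x ∈ C)
    (hBtriv : ∀ x ∈ B, ∀ y ∈ B, x + y = circ x y)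
    (hCtriv : ∀ x ∈ C, ∀ y ∈ C, x + y = circ x y) :
    ∀ β ∈ B, ∀ γ ∈ C, ∀ x ∈ B ⊔ C, lam (circ β γ) x = lam (circ γ β) x := by
  intro β hβ γ hγ x hx
  have fix_B : ∀ y ∈ B, lam β y = y := fun y hy ↦ lam_eq_self_iff.2 (hBtriv β hβ y hy)
  have fix_C : ∀ y ∈ C, lam γ y = y := fun y hy ↦ lam_eq_self_iff.2 (hCtriv γ hγ y hy)
  have eq_on_B : ∀ y ∈ B, lam (circ β γ) y = lam (circ γ β) y := fun y hy ↦ by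
    rw [lam_circ, lam_circ, fix_B _ (hB γ hγ y hy), fix_B y hy]
  have eq_on_C : ∀ y ∈ C, lam (circ β γ) y = lam (circ γ β) y := fun y hy ↦ by
    rw [lam_circ, lam_circ, fix_C _ (hC β hβ y hy), fix_C y hy]
  exact lam_eq_of_mem_sup eq_on_B eq_on_C hx

end Lam

/-- if `A = B + C` with `B, C` left ideals trivial as skew braces, then
`lam (β ∘ γ) = lam (γ ∘ β)` for all `β ∈ B`, `γ ∈ C`. -/
theorem stmt4 {A : Type*} [SkewBrace A] (B C : AddSubgroup A)
    (hB : ∀ a : A, ∀ x ∈ B, lam a x ∈ B)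
    (hC : ∀ a : A, ∀ x ∈ C, lam a x ∈ C)
    (hBtriv : ∀ x ∈ B, ∀ y ∈ B, x + y = circ x y)
    (hCtriv : ∀ x ∈ C, ∀ y ∈ C, x + y = circ x y)
    (hfact : ∀ a : A, ∃ b ∈ B, ∃ c ∈ C, a = b + c) :
    ∀ β ∈ B, ∀ γ ∈ C, ∀ x : A, lam (circ β γ) x = lam (circ γ β) x := by
  intro β hβ γ hγ x
  obtain ⟨b, hb, c, hc, rfl⟩ := hfact x
  exact stmt4_general B C (fun γ _ ↦ hB γ) (fun β _ ↦ hC β) hBtriv hCtriv β hβ γ hγ _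
    (AddSubgroup.add_mem_sup hb hc)
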